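/- Let Q' be an extended Dynkin quiver with extending vertex k and minimal positive imaginary root δ, and let Q be obtained from Q' by adjoining one new vertex j and one arrow joining j to k; let I be the vertex set of Q (and regard δ ∈ ℕ^I with δ_j = 0). Suppose λ ∈ K^I satisfies λ·δ = 0 and λ_j = 0. If α ∈ Σ_λ with α_j = 1 and mδ − α' ∈ ℕR_λ^+ for some m ≥ 0, where α' = α − α_j ε_j, then α = ε_j. -/

import Mathlib

open scoped BigOperators

noncomputable section

/-- A quiver with a finite vertex set `I` and a finite arrow set `A`;
`h a` and `t a` are the head and the tail of the arrow `a`. -/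
structure FinQuiver where
  I : Type
  [fintypeI : Fintype I]
  [decEqI : DecidableEq I]
  A : Type
  [fintypeA : Fintype A]
  h : A → I
  t : A → I

attribute [instance] FinQuiver.fintypeI FinQuiver.decEqI FinQuiver.fintypeA

namespace FinQuiver

variable (Q : FinQuiver)

/-- Arrows of the double quiver `Q̄` : every arrow `a : i → j` of `Q` (as `Sum.inl a`)
together with a reverse arrow `a* : j → i` (as `Sum.inr a`). -/
@[reducible] def DA : Type := Q.A ⊕ Q.A

instance : Fintype Q.DA := inferInstanceAs (Fintype (Q.A ⊕ Q.A))

/-- Head of an arrow of the double quiver. -/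
@[reducible] def dh : Q.DA → Q.I := fun a => match a with
  | Sum.inl a => Q.h a
  | Sum.inr a => Q.t a

/-- Tail of an arrow of the double quiver. -/
@[reducible] def dt : Q.DA → Q.I := fun a => match a with
  | Sum.inl a => Q.t a
  | Sum.inr a => Q.h a

/-- The symmetric bilinear form
`(α,β) = ∑_{i∈I} 2 α_i β_i − ∑_{a∈Q̄} α_{h(a)} β_{t(a)}` on `ℤ^I`. -/
def bil (α β : Q.I → ℤ) : ℤ :=
  (∑ i, 2 * α i * β i) - ∑ a : Q.DA, α (Q.dh a) * β (Q.dt a)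

/-- `p(α) = 1 − q(α) = 1 − α·α + ∑_{a ∈ Q} α_{t(a)} α_{h(a)}`. -/
def pp (α : Q.I → ℤ) : ℤ :=
  1 - (∑ i, α i * α i) + ∑ a : Q.A, α (Q.t a) * α (Q.h a)

/-- The coordinate vector `ε_i` at a vertex `i`. -/
def ev (i : Q.I) : Q.I → ℤ := fun j => if j = i then 1 else 0

/-- The coordinate vector of a vertex, as a vector of natural numbers. -/
def evN (i : Q.I) : Q.I → ℕ := fun j => if j = i then 1 else 0

/-- A vertex is loopfree if no arrow has both its head and its tail there. -/
def Loopfree (i : Q.I) : Prop := ∀ a : Q.A, ¬ (Q.h a = i ∧ Q.t a = i)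

/-- The reflection `s_i(α) = α − (α,ε_i) ε_i` at a (loopfree) vertex `i`. -/
def refl (i : Q.I) (α : Q.I → ℤ) : Q.I → ℤ := α - Q.bil α (Q.ev i) • Q.ev i

/-- Two vertices are joined by some arrow. -/
def Adj (i j : Q.I) : Prop :=
  ∃ a : Q.A, (Q.h a = i ∧ Q.t a = j) ∨ (Q.h a = j ∧ Q.t a = i)

/-- The quiver is connected. -/
def Connected : Prop := ∀ i j : Q.I, Relation.ReflTransGen Q.Adj i j

/-- The support of the vector `α` is connected in `Q`. -/
def SuppConnected (α : Q.I → ℤ) : Prop :=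
  ∀ i j : Q.I, α i ≠ 0 → α j ≠ 0 →
    Relation.ReflTransGen (fun x y => α x ≠ 0 ∧ α y ≠ 0 ∧ Q.Adj x y) i j

/-- The fundamental region: nonzero nonnegative vectors with connected support
such that `(α, ε_i) ≤ 0` for every vertex `i`. -/
def InFund (α : Q.I → ℤ) : Prop :=
  α ≠ 0 ∧ (∀ i, 0 ≤ α i) ∧ Q.SuppConnected α ∧ ∀ i, Q.bil α (Q.ev i) ≤ 0

/-- The roots of the Kac root system attached to `Q` : the real roots form the orbit
of the simple roots (coordinate vectors at loopfree vertices) under the reflections at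
loopfree vertices, and the imaginary roots form the orbit of `±(fundamental region)`
under these reflections. -/
inductive IsRoot : (Q.I → ℤ) → Prop
  | simple (i : Q.I) (hi : Q.Loopfree i) : IsRoot (Q.ev i)
  | fund (α : Q.I → ℤ) (hα : Q.InFund α) : IsRoot α
  | neg_fund (α : Q.I → ℤ) (hα : Q.InFund α) : IsRoot (-α)
  | reflect (i : Q.I) (hi : Q.Loopfree i) (α : Q.I → ℤ) (hα : IsRoot α) :
      IsRoot (Q.refl i α)

/-- Positive roots: roots all of whose components are nonnegative. -/
def IsPosRoot (α : Q.I → ℤ) : Prop := Q.IsRoot α ∧ (∀ i, 0 ≤ α i) ∧ α ≠ 0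

/-- The Tits form is positive semidefinite. -/
def PosSemidef : Prop := ∀ α : Q.I → ℤ, 0 ≤ Q.bil α α

/-- The Tits form is positive definite. -/
def PosDef : Prop := Q.PosSemidef ∧ ∀ α : Q.I → ℤ, Q.bil α α = 0 → α = 0

/-- Dynkin quivers: connected, with positive definite Tits form. -/
def IsDynkin : Prop := Q.Connected ∧ Q.PosDef

/-- Extended Dynkin quivers: connected, with positive semidefinite but not
positive definite Tits form. -/
def IsExtDynkin : Prop := Q.Connected ∧ Q.PosSemidef ∧ ¬ Q.PosDef

/-- `δ` is the minimal positive imaginary root of an extended Dynkin quiver: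
the minimal nonzero nonnegative vector in the radical of the Tits form. -/
def IsMinImag (δ : Q.I → ℤ) : Prop :=
  (∀ i, 0 ≤ δ i) ∧ δ ≠ 0 ∧ (∀ i, Q.bil δ (Q.ev i) = 0) ∧
    ∀ β : Q.I → ℤ, (∀ i, 0 ≤ β i) → β ≠ 0 → (∀ i, Q.bil β (Q.ev i) = 0) →
      ∀ i, δ i ≤ β i

/-- The subquiver of `Q` on a subset `S` of vertices and a subset `B` of arrows. -/
def restrict (S : Set Q.I) (B : Set Q.A) (hh : ∀ a ∈ B, Q.h a ∈ S)
    (ht : ∀ a ∈ B, Q.t a ∈ S) : FinQuiver :=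
  { I := S
    fintypeI := Fintype.ofFinite S
    decEqI := Classical.decEq _
    A := B
    fintypeA := Fintype.ofFinite B
    h := fun a => ⟨Q.h a.1, hh a.1 a.2⟩
    t := fun a => ⟨Q.t a.1, ht a.1 a.2⟩ }

/-- The support quiver of a vector: the full subquiver on the support of `β`. -/
def suppQuiver (β : Q.I → ℤ) : FinQuiver :=
  Q.restrict {i | β i ≠ 0} {a | β (Q.h a) ≠ 0 ∧ β (Q.t a) ≠ 0}
    (fun _ ha => ha.1) (fun _ ha => ha.2)

/-- A dimension vector (of natural numbers), viewed in `ℤ^I`. -/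
def toZ (α : Q.I → ℕ) : Q.I → ℤ := fun i => (α i : ℤ)

/-- An oriented cycle in the double quiver `Q̄`, consisting of `n+1` arrows,
the tail of each arrow being the head of the (cyclically) next one. -/
structure Cyc (Q' : FinQuiver) where
  n : ℕ
  ar : Fin (n + 1) → Q'.DA
  compat : ∀ i : Fin (n + 1), Q'.dt (ar i) = Q'.dh (ar (i + 1))

section WithField

variable (K : Type) [Field K]

/-- `λ·α = ∑_i λ_i α_i`. -/
def pair (l : Q.I → K) (α : Q.I → ℤ) : K := ∑ i, l i * (α i : K)

/-- `R_λ^+`, the set of positive roots `α` with `λ·α = 0`. -/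
def Rplus (l : Q.I → K) : Set (Q.I → ℤ) :=
  {α | Q.IsPosRoot α ∧ Q.pair K l α = 0}

/-- `ℕ R_λ^+`, the set of sums (including the empty sum `0`) of elements of `R_λ^+`. -/
def NRplus (l : Q.I → K) : Set (Q.I → ℤ) :=
  (AddSubmonoid.closure (Q.Rplus K l) : AddSubmonoid (Q.I → ℤ))

/-- `Σ_λ` : the elements `α ∈ R_λ^+` with `p(α) > ∑ p(β⁽ᵗ⁾)` for every decomposition
of `α` as a sum of at least two elements `β⁽ᵗ⁾` of `R_λ^+`. -/
def SigmaSet (l : Q.I → K) : Set (Q.I → ℤ) :=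
  {α | α ∈ Q.Rplus K l ∧
    ∀ (n : ℕ) (β : Fin n → (Q.I → ℤ)), 2 ≤ n → (∀ j, β j ∈ Q.Rplus K l) →
      α = ∑ j, β j → (∑ j, Q.pp (β j)) < Q.pp α}

/-- The dual reflection `r_i(λ)_j = λ_j − (ε_i,ε_j) λ_i`. -/
def coRefl (i : Q.I) (l : Q.I → K) : Q.I → K :=
  fun j => l j - (Q.bil (Q.ev i) (Q.ev j) : ℤ) * l i

/-- A single admissible reflection applied to the pair `(λ, α)`:
a reflection at a loopfree vertex `i` with `λ_i ≠ 0`. -/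
def AdmStep (x y : (Q.I → K) × (Q.I → ℤ)) : Prop :=
  ∃ i : Q.I, Q.Loopfree i ∧ x.1 i ≠ 0 ∧ y.1 = Q.coRefl K i x.1 ∧ y.2 = Q.refl i x.2

/-- `(ν,β)` is obtained from `(λ,α)` by a sequence of admissible reflections:
the two pairs lie in the same class of the equivalence relation generated by
admissible reflections. -/
def AdmEquiv (x y : (Q.I → K) × (Q.I → ℤ)) : Prop :=
  Relation.EqvGen (Q.AdmStep K) x y

/-- The space `Rep(Q̄,α)` of representations of the double quiver. -/
def Rep (α : Q.I → ℕ) : Type :=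
  ∀ a : Q.DA, Matrix (Fin (α (Q.dh a))) (Fin (α (Q.dt a))) K

/-- The moment map
`μ_α(x)_i = ∑_{a∈Q, h(a)=i} x_a x_{a*} − ∑_{a∈Q, t(a)=i} x_{a*} x_a`. -/
def moment (α : Q.I → ℕ) (x : Q.Rep K α) (i : Q.I) :
    Matrix (Fin (α i)) (Fin (α i)) K :=
  (∑ a : Q.A, if h : Q.h a = i then
      (x (Sum.inl a) * x (Sum.inr a)).submatrix
        (Fin.cast (congrArg α h).symm) (Fin.cast (congrArg α h).symm)
    else 0)
  - ∑ a : Q.A, if h : Q.t a = i then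
      (x (Sum.inr a) * x (Sum.inl a)).submatrix
        (Fin.cast (congrArg α h).symm) (Fin.cast (congrArg α h).symm)
    else 0

/-- The fibre `μ_α^{-1}(λ)` of the moment map over (the central element
corresponding to) `λ`. -/
def MomentFiber (l : Q.I → K) (α : Q.I → ℕ) : Set (Q.Rep K α) :=
  {x | ∀ i : Q.I, Q.moment K α x i = l i • (1 : Matrix (Fin (α i)) (Fin (α i)) K)}

/-- The group `∏_i GL(α_i,K)`; it acts on `Rep(Q̄,α)` by conjugation, with the same
orbits and the same invariant functions as `G(α) = (∏_i GL(α_i,K))/K^*`. -/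
def Gl (α : Q.I → ℕ) : Type := ∀ i : Q.I, Matrix.GeneralLinearGroup (Fin (α i)) K

/-- The conjugation action of `∏_i GL(α_i,K)` on `Rep(Q̄,α)`. -/
def glAct (α : Q.I → ℕ) (g : Q.Gl K α) (x : Q.Rep K α) : Q.Rep K α :=
  fun a => (g (Q.dh a) : Matrix (Fin (α (Q.dh a))) (Fin (α (Q.dh a))) K) * x a *
    (((g (Q.dt a))⁻¹ : Matrix.GeneralLinearGroup (Fin (α (Q.dt a))) K) :
      Matrix (Fin (α (Q.dt a))) (Fin (α (Q.dt a))) K)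

/-- Coordinates on `Rep(Q̄,α)`: matrix entries. -/
def Coords (α : Q.I → ℕ) : Type :=
  Σ a : Q.DA, Fin (α (Q.dh a)) × Fin (α (Q.dt a))

/-- The coordinate ring `K[V]` of a subset `V` of `Rep(Q̄,α)` : the algebra of
`K`-valued functions on `V` which are restrictions of polynomial functions. -/
def fnRing (α : Q.I → ℕ) (V : Set (Q.Rep K α)) : Subalgebra K (↥V → K) :=
  (MvPolynomial.aeval
    (fun c : Q.Coords α => fun v : ↥V => v.1 c.1 c.2.1 c.2.2) :
    MvPolynomial (Q.Coords α) K →ₐ[K] (↥V → K)).range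

end WithField

end FinQuiver

/-- The subalgebra of functions invariant under a relation (e.g. the orbit
relation of a group action). -/
def relInv (K : Type) [Field K] {V : Type} (R : V → V → Prop) :
    Subalgebra K (V → K) where
  carrier := {f | ∀ x y : V, R x y → f x = f y}
  mul_mem' := by
    intro f g hf hg x y hxy
    simp only [Pi.mul_apply, hf x y hxy, hg x y hxy]
  one_mem' := fun x y _ => rfl
  add_mem' := by
    intro f g hf hg x y hxy
    simp only [Pi.add_apply, hf x y hxy, hg x y hxy]
  zero_mem' := fun x y _ => rfl
  algebraMap_mem' := fun c x y _ => rfl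

namespace FinQuiver

variable (Q : FinQuiver) (K : Type) [Field K]

/-- The coordinate ring of the Marsden–Weinstein reduction
`N(λ,α) = μ_α^{-1}(λ) ⫽ G(α)` : the `G(α)`-invariant functions in the coordinate
ring of `μ_α^{-1}(λ)`.  Two such reductions are isomorphic as (affine) varieties
exactly when these `K`-algebras are isomorphic. -/
def InvRing (l : Q.I → K) (α : Q.I → ℕ) :
    Subalgebra K (↥(Q.MomentFiber K l α) → K) :=
  Q.fnRing K α (Q.MomentFiber K l α) ⊓
    relInv K (fun x y : ↥(Q.MomentFiber K l α) =>
      ∃ g : Q.Gl K α, y.1 = Q.glAct K α g x.1)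

/-- Index type for a product `∏_t X_t^{m_t}`. -/
@[reducible] def SymIdx (s : ℕ) (m : Fin s → ℕ) : Type := Σ t : Fin s, Fin (m t)

/-- The product `∏_{t} Rep(Q̄, d_t)^{m_t}` of representation spaces. -/
def SymRep (s : ℕ) (m : Fin s → ℕ) (d : Fin s → (Q.I → ℕ)) : Type :=
  ∀ p : SymIdx s m, Q.Rep K (d p.1)

/-- The product `∏_t μ_{d_t}^{-1}(λ)^{m_t}` of moment map fibres. -/
def SymFiber (s : ℕ) (m : Fin s → ℕ) (d : Fin s → (Q.I → ℕ)) (l : Q.I → K) :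
    Set (Q.SymRep K s m d) :=
  {x | ∀ p : SymIdx s m, x p ∈ Q.MomentFiber K l (d p.1)}

/-- Polynomial functions on the product of fibres. -/
def symFnRing (s : ℕ) (m : Fin s → ℕ) (d : Fin s → (Q.I → ℕ)) (l : Q.I → K) :
    Subalgebra K (↥(Q.SymFiber K s m d l) → K) :=
  (MvPolynomial.aeval
    (fun c : Σ p : SymIdx s m, Q.Coords (d p.1) =>
      fun v : ↥(Q.SymFiber K s m d l) => v.1 c.1 c.2.1 c.2.2.1 c.2.2.2) :
    MvPolynomial (Σ p : SymIdx s m, Q.Coords (d p.1)) K →ₐ[K]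
      (↥(Q.SymFiber K s m d l) → K)).range

/-- The componentwise action of the product of the groups `∏ GL(d_t)^{m_t}`. -/
def symGlAct (s : ℕ) (m : Fin s → ℕ) (d : Fin s → (Q.I → ℕ))
    (g : ∀ p : SymIdx s m, Q.Gl K (d p.1)) (x : Q.SymRep K s m d) :
    Q.SymRep K s m d :=
  fun p => Q.glAct K (d p.1) (g p) (x p)

/-- The action of `∏_t S_{m_t}` permuting the factors of each `X_t^{m_t}`. -/
def symPermAct (s : ℕ) (m : Fin s → ℕ) (d : Fin s → (Q.I → ℕ))
    (π : ∀ t : Fin s, Equiv.Perm (Fin (m t))) (x : Q.SymRep K s m d) :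
    Q.SymRep K s m d :=
  fun p => x ⟨p.1, π p.1 p.2⟩

/-- The coordinate ring of the product of symmetric products
`∏_t S^{m_t} N(λ, d_t)` of Marsden–Weinstein reductions: functions on
`∏_t μ_{d_t}^{-1}(λ)^{m_t}` which are polynomial, invariant under all the groups
`G(d_t)` acting on the separate factors, and symmetric under permutations of the
`m_t` factors of each type `t`. -/
def SymInvRing (s : ℕ) (m : Fin s → ℕ) (d : Fin s → (Q.I → ℕ)) (l : Q.I → K) :
    Subalgebra K (↥(Q.SymFiber K s m d l) → K) :=
  Q.symFnRing K s m d l ⊓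
    relInv K (fun x y : ↥(Q.SymFiber K s m d l) =>
      ∃ g : ∀ p : SymIdx s m, Q.Gl K (d p.1), y.1 = Q.symGlAct K s m d g x.1) ⊓
    relInv K (fun x y : ↥(Q.SymFiber K s m d l) =>
      ∃ π : ∀ t : Fin s, Equiv.Perm (Fin (m t)), y.1 = Q.symPermAct K s m d π x.1)

/-- The trace function `tr_p` of an oriented cycle `p` in `Q̄` :
`tr_p(x) = tr(x_{a_1} ⋯ x_{a_ℓ})`, written out via matrix entries. -/
def cycTr (α : Q.I → ℕ) (p : Q.Cyc) (x : Q.Rep K α) : K :=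
  ∑ c : ∀ i : Fin (p.n + 1), Fin (α (Q.dh (p.ar i))),
    ∏ i : Fin (p.n + 1),
      x (p.ar i) (c i) (Fin.cast (congrArg α (p.compat i)).symm (c (i + 1)))

/-- `U` is a subrepresentation of the `Π^λ`-module given by the point
`x ∈ Rep(Q̄,α)` : a collection of subspaces stable under all the maps `x_a`. -/
def SubRep (α : Q.I → ℕ) (x : Q.Rep K α)
    (U : ∀ i : Q.I, Submodule K (Fin (α i) → K)) : Prop :=
  ∀ a : Q.DA, ∀ v ∈ U (Q.dt a), (x a).mulVec v ∈ U (Q.dh a)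

/-- The module given by `x` has the simple module `S_{i₀}` (dimension vector
`ε_{i₀}`, all arrows acting as zero) as a composition factor: it has a subquotient
of dimension vector `ε_{i₀}` on which all arrows act as zero. -/
def HasSFactor (α : Q.I → ℕ) (i0 : Q.I) (x : Q.Rep K α) : Prop :=
  ∃ U W : ∀ i : Q.I, Submodule K (Fin (α i) → K),
    Q.SubRep K α x U ∧ Q.SubRep K α x W ∧ (∀ i, U i ≤ W i) ∧
    (∀ i, Module.finrank K (W i) =
      Module.finrank K (U i) + (if i = i0 then 1 else 0)) ∧
    (∀ a : Q.DA, Q.dh a = i0 → Q.dt a = i0 →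
      ∀ v ∈ W (Q.dt a), (x a).mulVec v ∈ U (Q.dh a))

/-- `W/U` is a simple subquotient of the module given by `x`; the simple
subquotients of a module are, up to isomorphism, exactly its composition factors. -/
def SimpleSubquot (α : Q.I → ℕ) (x : Q.Rep K α)
    (U W : ∀ i : Q.I, Submodule K (Fin (α i) → K)) : Prop :=
  Q.SubRep K α x U ∧ Q.SubRep K α x W ∧ (∀ i, U i ≤ W i) ∧ U ≠ W ∧
    ∀ V : ∀ i : Q.I, Submodule K (Fin (α i) → K),
      Q.SubRep K α x V → (∀ i, U i ≤ V i) → (∀ i, V i ≤ W i) → V = U ∨ V = W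

/-- The direct sum map `∏_{j=1}^m Rep(Q̄,δ) → Rep(Q̄,mδ)` (block diagonal). -/
def dsMap (δ : Q.I → ℕ) (m : ℕ) (y : Fin m → Q.Rep K δ) :
    Q.Rep K (fun i => m * δ i) :=
  fun a => Matrix.of fun r c =>
    if (finProdFinEquiv.symm r).1 = (finProdFinEquiv.symm c).1 then
      y (finProdFinEquiv.symm r).1 a (finProdFinEquiv.symm r).2
        (finProdFinEquiv.symm c).2
    else 0

end FinQuiver

/-!
Write `α = ε_j + a` with `a` supported on the extended Dynkin quiver `Q'`. Let `L` be the lattice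
of vectors on `Q'` orthogonal to `λ`, and let `β ≥ 0` be a real root of `Q'` in `L`. The reflection
of `α` in `β` again lies in `R_λ^+` and has the same `p`, so if `(α, β)` were positive then `α`
would be this reflection plus `(α, β)` copies of `β`, where `p(β) = 0`, against `α ∈ Σ_λ`. Hence
`(α, β) ≤ 0`, that is, `(a, β) ≤ β_k`.

Put `γ = a − a_k δ`. If `β ∈ L` is a root with `β_k = 0`, then `β + δ ≥ 0`, so `(γ, β) ≤ 1`: the
vector `γ` is minuscule for the finite root system of the roots `β ∈ L` with `β_k = 0`. Since
`mδ − a ∈ ℕR_λ^+`, it also lies in the root lattice of this system, where the only minuscule vector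
is `0`. So `α = ε_j + a_k δ`, and then `p(α) = a_k = p(ε_j) + a_k p(δ)` forces `a_k = 0`.
-/

section BilinReflection

variable {V : Type*} [AddCommGroup V]

section CommRing

variable {R : Type*} [CommRing R] [Module R V] {B : LinearMap.BilinForm R V} {β : V}

/-- The reflection `x ↦ x − B(x, β) β`; it is an isometry when `B` is symmetric and
`B(β, β) = 2`. -/
def bilinReflection (B : LinearMap.BilinForm R V) (β : V) : V →ₗ[R] V :=
  Module.preReflection β (B.flip β)

theorem bilinReflection_apply (B : LinearMap.BilinForm R V) (β x : V) :
    bilinReflection B β x = x - B x β • β :=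
  Module.preReflection_apply ..

theorem bilinReflection_involutive (hβ : B β β = 2) :
    Function.Involutive (bilinReflection B β) :=
  Module.involutive_preReflection hβ

theorem apply_bilinReflection_left (hB : B.IsSymm) (β x y : V) :
    B (bilinReflection B β x) y = B x (bilinReflection B β y) := by
  simp only [bilinReflection_apply, map_sub, map_smul, LinearMap.sub_apply, LinearMap.smul_apply,
    smul_eq_mul, hB.eq y β]
  ring

theorem apply_bilinReflection_bilinReflection (hB : B.IsSymm) (hβ : B β β = 2) (x y : V) :
    B (bilinReflection B β x) (bilinReflection B β y) = B x y := by
  rw [apply_bilinReflection_left hB, bilinReflection_involutive hβ]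

theorem bilinReflection_bilinReflection_apply (hB : B.IsSymm) (hβ : B β β = 2) (γ x : V) :
    bilinReflection B (bilinReflection B β γ) x =
      bilinReflection B β (bilinReflection B γ (bilinReflection B β x)) := by
  rw [bilinReflection_apply B γ, map_sub, map_smul, bilinReflection_involutive hβ,
    apply_bilinReflection_left hB, bilinReflection_apply]

end CommRing

section Minuscule

variable {B : LinearMap.BilinForm ℤ V} {R : Set V}

theorem exists_multiset_sum_eq_of_mem_closure (hneg : ∀ β ∈ R, -β ∈ R) {x : V}
    (hx : x ∈ AddSubgroup.closure R) : ∃ s : Multiset V, (∀ β ∈ s, β ∈ R) ∧ s.sum = x := by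
  have hR : R ∪ -R = R := Set.union_eq_left.2 fun β hβ => neg_neg β ▸ hneg _ hβ
  rw [← AddSubgroup.mem_toAddSubmonoid, AddSubgroup.closure_toAddSubmonoid, hR] at hx
  exact AddSubmonoid.exists_multiset_of_mem_closure hx

-- If some summand `β` of `x` has `B(x, β) > 0`, then `B(x, β) = 1`, so removing `β` from the sum
-- reflects `x` in `β`: the number of summands drops while `B(x, x)` does not change.
theorem apply_sum_self_nonpos (hB : B.IsSymm) (hR : ∀ β ∈ R, B β β = 2)
    (hrefl : ∀ β ∈ R, ∀ γ ∈ R, bilinReflection B β γ ∈ R) {s : Multiset V} (hs : ∀ β ∈ s, β ∈ R)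
    (hle : ∀ β ∈ R, B s.sum β ≤ 1) : B s.sum s.sum ≤ 0 := by
  induction s using Multiset.strongInductionOn with | _ s ih
  by_cases hpos : ∃ β ∈ s, 0 < B s.sum β
  · obtain ⟨β, hβs, hβpos⟩ := hpos
    have hβ := hs β hβs
    have hone : B s.sum β = 1 := le_antisymm (hle β hβ) hβpos
    classical
    have herase : (s.erase β).sum = bilinReflection B β s.sum := by
      rw [bilinReflection_apply, hone, one_smul, ← Multiset.sum_erase hβs, add_sub_cancel_left]
    have hlt := ih (s.erase β) (Multiset.erase_lt.2 hβs)
      (fun γ hγ => hs γ (Multiset.mem_of_mem_erase hγ))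
      (fun γ hγ => by
        rw [herase, apply_bilinReflection_left hB]
        exact hle _ (hrefl β hβ γ hγ))
    rwa [herase, apply_bilinReflection_bilinReflection hB (hR β hβ)] at hlt
  · push Not at hpos
    rw [map_multiset_sum]
    refine (Multiset.sum_le_card_nsmul _ 0 fun c hc => ?_).trans_eq (smul_zero _)
    obtain ⟨β, hβ, rfl⟩ := Multiset.mem_map.1 hc
    exact hpos β hβ

theorem apply_self_nonpos_of_mem_closure (hB : B.IsSymm) (hR : ∀ β ∈ R, B β β = 2)
    (hrefl : ∀ β ∈ R, ∀ γ ∈ R, bilinReflection B β γ ∈ R) {x : V}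
    (hx : x ∈ AddSubgroup.closure R) (hle : ∀ β ∈ R, B x β ≤ 1) : B x x ≤ 0 := by
  have hneg : ∀ β ∈ R, -β ∈ R := fun β hβ =>
    Module.preReflection_apply_self (f := B.flip β) (hR β hβ) ▸ hrefl β hβ β hβ
  obtain ⟨s, hs, rfl⟩ := exists_multiset_sum_eq_of_mem_closure hneg hx
  exact apply_sum_self_nonpos hB hR hrefl hs hle

end Minuscule

end BilinReflection

namespace FinQuiver

section TitsForm

variable {Q : FinQuiver}

theorem bil_eq_sum (x y : Q.I → ℤ) : Q.bil x y =
    (∑ i, 2 * x i * y i) - ∑ a : Q.A, (x (Q.h a) * y (Q.t a) + x (Q.t a) * y (Q.h a)) := by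
  rw [bil, Finset.sum_add_distrib]
  exact congrArg _ (Fintype.sum_sum_type _)

theorem bil_comm (x y : Q.I → ℤ) : Q.bil x y = Q.bil y x := by
  rw [bil_eq_sum, bil_eq_sum]
  congr 1 <;> exact Finset.sum_congr rfl fun _ _ => by ring

theorem bil_add_left (x y z : Q.I → ℤ) : Q.bil (x + y) z = Q.bil x z + Q.bil y z := by
  simp only [bil_eq_sum, Pi.add_apply, mul_add, add_mul, Finset.sum_add_distrib]
  ring

theorem bil_smul_left (c : ℤ) (x y : Q.I → ℤ) : Q.bil (c • x) y = c * Q.bil x y := by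
  simp only [bil_eq_sum, Pi.smul_apply, smul_eq_mul, mul_sub, Finset.mul_sum]
  congr 1 <;> exact Finset.sum_congr rfl fun _ _ => by ring

theorem bil_add_right (x y z : Q.I → ℤ) : Q.bil x (y + z) = Q.bil x y + Q.bil x z := by
  rw [bil_comm, bil_add_left, bil_comm y, bil_comm z]

theorem bil_smul_right (c : ℤ) (x y : Q.I → ℤ) : Q.bil x (c • y) = c * Q.bil x y := by
  rw [bil_comm, bil_smul_left, bil_comm y]

variable (Q) in
/-- The symmetric form `(α, β)` on `ℤ^I` as a bundled bilinear form. -/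
def titsForm : LinearMap.BilinForm ℤ (Q.I → ℤ) :=
  LinearMap.mk₂ ℤ Q.bil bil_add_left bil_smul_left bil_add_right bil_smul_right

theorem titsForm_apply (x y : Q.I → ℤ) : Q.titsForm x y = Q.bil x y := rfl

theorem titsForm_isSymm : Q.titsForm.IsSymm := ⟨bil_comm⟩

theorem bil_neg_left (x y : Q.I → ℤ) : Q.bil (-x) y = -Q.bil x y :=
  Q.titsForm.map_neg₂ x y

theorem bil_neg_right (x y : Q.I → ℤ) : Q.bil x (-y) = -Q.bil x y :=
  map_neg (Q.titsForm x) y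

theorem bil_sub_left (x y z : Q.I → ℤ) : Q.bil (x - y) z = Q.bil x z - Q.bil y z :=
  Q.titsForm.map_sub₂ x y z

theorem bil_sub_right (x y z : Q.I → ℤ) : Q.bil x (y - z) = Q.bil x y - Q.bil x z :=
  map_sub (Q.titsForm x) y z

theorem sum_smul_ev (x : Q.I → ℤ) : ∑ i, x i • Q.ev i = x := by
  ext t
  simp [ev]

theorem ev_nonneg (i : Q.I) : 0 ≤ Q.ev i := fun t => by
  unfold ev
  split_ifs <;> simp

theorem bil_eq_sum_mul_bil_ev (x y : Q.I → ℤ) : Q.bil x y = ∑ i, y i * Q.bil x (Q.ev i) := by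
  conv_lhs => rw [← sum_smul_ev y, ← titsForm_apply, map_sum]
  simp only [titsForm_apply, bil_smul_right]

theorem bil_ev (x : Q.I → ℤ) (i : Q.I) : Q.bil x (Q.ev i) = 2 * x i -
    ∑ a : Q.A, ((if Q.t a = i then x (Q.h a) else 0) + if Q.h a = i then x (Q.t a) else 0) := by
  simp [bil_eq_sum, ev]

theorem two_mul_pp (x : Q.I → ℤ) : 2 * Q.pp x = 2 - Q.bil x x := by
  have hI : ∑ i, 2 * x i * x i = 2 * ∑ i, x i * x i := by
    simp only [Finset.mul_sum, mul_assoc]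
  have hA : ∑ a : Q.A, (x (Q.h a) * x (Q.t a) + x (Q.t a) * x (Q.h a)) =
      2 * ∑ a : Q.A, x (Q.t a) * x (Q.h a) := by
    rw [Finset.mul_sum]
    exact Finset.sum_congr rfl fun _ _ => by ring
  rw [pp, bil_eq_sum, hI, hA]
  ring

theorem even_bil_self (x : Q.I → ℤ) : Even (Q.bil x x) :=
  ⟨1 - Q.pp x, by linarith [two_mul_pp x]⟩

theorem bil_ev_self_of_loopfree {i : Q.I} (hi : Q.Loopfree i) :
    Q.bil (Q.ev i) (Q.ev i) = 2 := by
  have hzero : ∀ a : Q.A, ((if Q.t a = i then Q.ev i (Q.h a) else 0) +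
      if Q.h a = i then Q.ev i (Q.t a) else 0) = 0 := fun a => by
    have := hi a
    simp only [ev]
    split_ifs <;> tauto
  rw [bil_ev, Finset.sum_eq_zero fun a _ => hzero a]
  simp [ev]

theorem bil_ev_self_nonpos_of_not_loopfree {i : Q.I} (hi : ¬ Q.Loopfree i) :
    Q.bil (Q.ev i) (Q.ev i) ≤ 0 := by
  obtain ⟨a, ha⟩ := not_forall.1 hi
  obtain ⟨hh, ht⟩ := not_not.1 ha
  have hnonneg : ∀ a ∈ Finset.univ, 0 ≤ (if Q.t a = i then Q.ev i (Q.h a) else 0) +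
      if Q.h a = i then Q.ev i (Q.t a) else 0 := fun a _ => by
    simp only [ev]
    split_ifs <;> simp
  have hle := Finset.single_le_sum hnonneg (Finset.mem_univ a)
  rw [bil_ev]
  simp only [hh, ht, if_true, ev] at hle ⊢
  linarith

theorem bil_nonpos_of_mul_eq_zero {x y : Q.I → ℤ} (hx : 0 ≤ x) (hy : 0 ≤ y)
    (hxy : ∀ i, x i * y i = 0) : Q.bil x y ≤ 0 := by
  have hI : ∑ i, 2 * x i * y i = 0 :=
    Finset.sum_eq_zero fun i _ => by rw [mul_assoc, hxy, mul_zero]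
  rw [bil_eq_sum, hI, zero_sub, neg_nonpos]
  exact Finset.sum_nonneg fun a _ =>
    add_nonneg (mul_nonneg (hx _) (hy _)) (mul_nonneg (hx _) (hy _))

theorem bil_self_posPart_add_negPart_le (x : Q.I → ℤ) :
    Q.bil x⁺ x⁺ + Q.bil x⁻ x⁻ ≤ Q.bil x x := by
  have hcross : Q.bil x⁺ x⁻ ≤ 0 :=
    bil_nonpos_of_mul_eq_zero (posPart_nonneg x) (negPart_nonneg x) fun i => by
      rcases le_total (x i) 0 with h | h <;> simp [h]
  have hexpand : Q.bil x x = Q.bil x⁺ x⁺ - 2 * Q.bil x⁺ x⁻ + Q.bil x⁻ x⁻ := by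
    conv_lhs => rw [← posPart_sub_negPart x]
    rw [bil_sub_left, bil_sub_right, bil_sub_right, bil_comm x⁻ x⁺]
    ring
  linarith

theorem exists_bil_ev_pos {x : Q.I → ℤ} (hx : 0 ≤ x) (hpos : 0 < Q.bil x x) :
    ∃ i, 0 < Q.bil x (Q.ev i) := by
  by_contra! hle
  rw [bil_eq_sum_mul_bil_ev] at hpos
  exact hpos.not_ge
    (Finset.sum_nonpos fun i _ => mul_nonpos_of_nonneg_of_nonpos (hx i) (hle i))

theorem eq_zero_of_adj {x : Q.I → ℤ} (hx : 0 ≤ x) {u v : Q.I} (hv : x v = 0)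
    (hbil : Q.bil x (Q.ev v) = 0) (huv : Q.Adj u v) : x u = 0 := by
  have hnonneg : ∀ a ∈ Finset.univ, 0 ≤ (if Q.t a = v then x (Q.h a) else 0) +
      if Q.h a = v then x (Q.t a) else 0 := fun a _ => by
    have hh := hx (Q.h a)
    have ht := hx (Q.t a)
    simp only [Pi.zero_apply] at hh ht
    split_ifs <;> linarith
  rw [bil_ev, hv, mul_zero, zero_sub, neg_eq_zero, Finset.sum_eq_zero_iff_of_nonneg hnonneg] at hbil
  obtain ⟨a, ha⟩ := huv
  have hzero := hbil a (Finset.mem_univ a)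
  have hu := hx u
  simp only [Pi.zero_apply] at hu
  rcases ha with ⟨rfl, rfl⟩ | ⟨rfl, rfl⟩ <;> simp only [if_true] at hzero <;>
    split_ifs at hzero <;> linarith

end TitsForm

section RealRoots

/-- The real roots: the orbit of the simple roots under the reflections at loopfree vertices. -/
inductive IsRealRoot (Q : FinQuiver) : (Q.I → ℤ) → Prop
  | simple (i : Q.I) (hi : Q.Loopfree i) : Q.IsRealRoot (Q.ev i)
  | reflect (i : Q.I) (hi : Q.Loopfree i) (α : Q.I → ℤ) (hα : Q.IsRealRoot α) :
      Q.IsRealRoot (Q.refl i α)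

variable {Q : FinQuiver} {α β : Q.I → ℤ} {i : Q.I}

theorem refl_eq_bilinReflection (i : Q.I) (α : Q.I → ℤ) :
    Q.refl i α = bilinReflection Q.titsForm (Q.ev i) α :=
  (bilinReflection_apply Q.titsForm (Q.ev i) α).symm

theorem refl_refl (hi : Q.Loopfree i) (α : Q.I → ℤ) : Q.refl i (Q.refl i α) = α := by
  rw [refl_eq_bilinReflection, refl_eq_bilinReflection]
  exact bilinReflection_involutive (bil_ev_self_of_loopfree hi) α

theorem bil_refl_self (hi : Q.Loopfree i) (α : Q.I → ℤ) :
    Q.bil (Q.refl i α) (Q.refl i α) = Q.bil α α := by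
  rw [refl_eq_bilinReflection]
  exact apply_bilinReflection_bilinReflection titsForm_isSymm (bil_ev_self_of_loopfree hi) α α

theorem InFund.bil_self_nonpos (hα : Q.InFund α) : Q.bil α α ≤ 0 := by
  rw [bil_eq_sum_mul_bil_ev]
  exact Finset.sum_nonpos fun i _ => mul_nonpos_of_nonneg_of_nonpos (hα.2.1 i) (hα.2.2.2 i)

theorem IsRoot.bil_self_le_two (hα : Q.IsRoot α) : Q.bil α α ≤ 2 := by
  induction hα with
  | simple i hi => exact (bil_ev_self_of_loopfree hi).le
  | fund α hα => exact hα.bil_self_nonpos.trans zero_le_two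
  | neg_fund α hα =>
    rw [bil_neg_left, bil_neg_right, neg_neg]
    exact hα.bil_self_nonpos.trans zero_le_two
  | reflect i hi α _ ih => rwa [bil_refl_self hi]

theorem IsRealRoot.isRoot (hβ : Q.IsRealRoot β) : Q.IsRoot β := by
  induction hβ with
  | simple i hi => exact .simple i hi
  | reflect i hi β _ ih => exact .reflect i hi β ih

theorem IsRealRoot.isRoot_bilinReflection (hβ : Q.IsRealRoot β) (hα : Q.IsRoot α) :
    Q.IsRoot (bilinReflection Q.titsForm β α) := by
  induction hβ generalizing α with
  | simple i hi =>
    rw [← refl_eq_bilinReflection]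
    exact .reflect i hi α hα
  | reflect i hi β _ ih =>
    rw [refl_eq_bilinReflection, bilinReflection_bilinReflection_apply titsForm_isSymm
      (bil_ev_self_of_loopfree hi), ← refl_eq_bilinReflection, ← refl_eq_bilinReflection]
    exact .reflect i hi _ (ih (.reflect i hi α hα))

end RealRoots

section PosSemidef

variable {Q : FinQuiver} {x δ : Q.I → ℤ} {i k : Q.I}

theorem PosSemidef.bil_eq_zero (hQ : Q.PosSemidef) (hδ : Q.bil δ δ = 0) (x : Q.I → ℤ) :
    Q.bil δ x = 0 := by
  have hker := (LinearMap.BilinForm.apply_apply_same_eq_zero_iff Q.titsForm hQ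
    (LinearMap.BilinForm.isSymm_iff.1 titsForm_isSymm)).1 hδ
  exact LinearMap.congr_fun hker x

theorem PosSemidef.bil_add_smul_self (hQ : Q.PosSemidef) (hδ : Q.bil δ δ = 0) (x : Q.I → ℤ)
    (c : ℤ) : Q.bil (x + c • δ) (x + c • δ) = Q.bil x x := by
  rw [bil_add_left, bil_smul_left, hQ.bil_eq_zero hδ, mul_zero, add_zero, bil_comm, bil_add_left,
    bil_smul_left, hQ.bil_eq_zero hδ, mul_zero, add_zero]

theorem PosSemidef.loopfree_of_bil_ev_ne_zero (hQ : Q.PosSemidef)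
    (hx : Q.bil x (Q.ev i) ≠ 0) : Q.Loopfree i := by
  by_contra hi
  refine hx ?_
  rw [bil_comm]
  exact hQ.bil_eq_zero ((bil_ev_self_nonpos_of_not_loopfree hi).antisymm (hQ _)) x

theorem Connected.eq_zero_or_forall_pos (hconn : Q.Connected) (hQ : Q.PosSemidef) (hx : 0 ≤ x)
    (hxx : Q.bil x x = 0) : x = 0 ∨ ∀ i, 0 < x i := by
  by_cases hzero : ∃ v, x v = 0
  · obtain ⟨v, hv⟩ := hzero
    left
    funext u
    induction hconn u v using Relation.ReflTransGen.head_induction_on with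
    | refl => exact hv
    | head huw _ ih => exact eq_zero_of_adj hx ih (hQ.bil_eq_zero hxx _) huw
  · exact Or.inr fun i => (hx i).lt_of_ne fun hi => hzero ⟨i, hi.symm⟩

theorem Connected.nonneg_or_nonpos (hconn : Q.Connected) (hQ : Q.PosSemidef)
    (hx : Q.bil x x ≤ 2) : 0 ≤ x ∨ x ≤ 0 := by
  have hle := bil_self_posPart_add_negPart_le x
  have hpos := hQ x⁺
  have hneg := hQ x⁻
  obtain ⟨a, ha⟩ := even_bil_self x⁺
  obtain ⟨b, hb⟩ := even_bil_self x⁻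
  obtain h | h : Q.bil x⁺ x⁺ = 0 ∨ Q.bil x⁻ x⁻ = 0 := by lia
  · rcases hconn.eq_zero_or_forall_pos hQ (posPart_nonneg x) h with h | h
    · exact Or.inr (posPart_eq_zero.1 h)
    · exact Or.inl fun i => (posPart_pos_iff.1 (h i)).le
  · rcases hconn.eq_zero_or_forall_pos hQ (negPart_nonneg x) h with h | h
    · exact Or.inl (negPart_eq_zero.1 h)
    · exact Or.inr fun i => (negPart_pos_iff.1 (h i)).le

theorem Connected.nonneg_of_pos (hconn : Q.Connected) (hQ : Q.PosSemidef)
    (hx : Q.bil x x ≤ 2) (hk : 0 < x k) : 0 ≤ x :=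
  (hconn.nonneg_or_nonpos hQ hx).resolve_right fun h => (h k).not_gt hk

theorem Connected.eq_zero_of_isotropic (hconn : Q.Connected) (hQ : Q.PosSemidef)
    (hx : Q.bil x x = 0) (hk : x k = 0) : x = 0 := by
  rcases hconn.nonneg_or_nonpos hQ (hx.trans_le zero_le_two) with hnonneg | hnonpos
  · exact (hconn.eq_zero_or_forall_pos hQ hnonneg hx).resolve_right fun h => (h k).ne' hk
  · have hneg : Q.bil (-x) (-x) = 0 := by rw [bil_neg_left, bil_neg_right, neg_neg, hx]
    refine neg_eq_zero.1 <| (hconn.eq_zero_or_forall_pos hQ (neg_nonneg.2 hnonpos) hneg)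
      |>.resolve_right fun h => (h k).ne' ?_
    rw [Pi.neg_apply, hk, neg_zero]

theorem eq_ev_of_refl_nonpos (hi : Q.Loopfree i) (hx : 0 ≤ x) (hxx : Q.bil x x = 2)
    (hrefl : Q.refl i x ≤ 0) : x = Q.ev i := by
  have hsupp : x = x i • Q.ev i := by
    funext t
    have ht := hrefl t
    by_cases hti : t = i
    · simp [ev, hti]
    · simp only [refl, ev, hti, Pi.sub_apply, Pi.smul_apply, smul_eq_mul, if_false, mul_zero,
        sub_zero, Pi.zero_apply] at ht ⊢
      exact ht.antisymm (hx t)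
  have hsq : x i * x i = 1 := by
    rw [hsupp, bil_smul_left, bil_smul_right, bil_ev_self_of_loopfree hi] at hxx
    linarith
  have hone : x i = 1 := (mul_self_eq_one_iff.1 hsq).resolve_right fun h =>
    absurd (hx i) (by simp [h])
  rw [hsupp, hone, one_smul]

-- Induction on the height `∑ i, x i`: reflecting at a vertex where `(x, ε_i) > 0` lowers it.
theorem Connected.isRealRoot_of_nonneg (hconn : Q.Connected) (hQ : Q.PosSemidef) (hx : 0 ≤ x)
    (hxx : Q.bil x x = 2) : Q.IsRealRoot x := by
  induction hn : (∑ i, x i).toNat using Nat.strong_induction_on generalizing x with | _ n ih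
  obtain ⟨i, hi⟩ := exists_bil_ev_pos hx (by rw [hxx]; exact two_pos)
  have hloop := hQ.loopfree_of_bil_ev_ne_zero hi.ne'
  have hself : Q.bil (Q.refl i x) (Q.refl i x) = 2 := (bil_refl_self hloop x).trans hxx
  rcases hconn.nonneg_or_nonpos hQ hself.le with hnonneg | hnonpos
  · have hsum : ∑ t, Q.refl i x t = ∑ t, x t - Q.bil x (Q.ev i) := by
      simp [refl, ev, Finset.sum_sub_distrib]
    have hsum_nonneg : 0 ≤ ∑ t, Q.refl i x t := Finset.sum_nonneg fun t _ => hnonneg t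
    rw [← refl_refl hloop x]
    exact .reflect i hloop _ (ih _ (by lia) hnonneg hself rfl)
  · rw [eq_ev_of_refl_nonpos hloop hx hxx hnonpos]
    exact .simple i hloop

end PosSemidef

section RootLattice

variable {Q : FinQuiver} {L : AddSubgroup (Q.I → ℤ)} {x y β δ : Q.I → ℤ} {k : Q.I}

/-- The vectors of `ℤ^I` whose coordinate at `k` is zero. When `k` is an extending vertex of an
extended Dynkin quiver, this is the root lattice of the underlying Dynkin quiver. -/
def vanishAt (k : Q.I) : AddSubgroup (Q.I → ℤ) := (Pi.evalAddMonoidHom (fun _ => ℤ) k).ker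

theorem mem_vanishAt : x ∈ vanishAt k ↔ x k = 0 := Iff.rfl

/-- The vectors `β` of a lattice `L` with `(β, β) = 2`; for an extended Dynkin quiver they are the
real roots lying in `L`. -/
def latticeRoots (L : AddSubgroup (Q.I → ℤ)) : Set (Q.I → ℤ) := {β | β ∈ L ∧ Q.bil β β = 2}

/-- The vectors `x` of a lattice `L` with `(x, x) ≤ 2`, the bound satisfied by all roots. -/
def shortVectors (L : AddSubgroup (Q.I → ℤ)) : Set (Q.I → ℤ) := {x | x ∈ L ∧ Q.bil x x ≤ 2}

theorem bilinReflection_mem_latticeRoots (hβ : β ∈ latticeRoots L) (hx : x ∈ latticeRoots L) :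
    bilinReflection Q.titsForm β x ∈ latticeRoots L := by
  refine ⟨?_, (apply_bilinReflection_bilinReflection titsForm_isSymm hβ.2 x x).trans hx.2⟩
  rw [bilinReflection_apply]
  exact L.sub_mem hx.1 (L.zsmul_mem hβ.1 _)

theorem bil_self_le_zero_of_minuscule (hx : x ∈ AddSubgroup.closure (latticeRoots L))
    (hle : ∀ β ∈ latticeRoots L, Q.bil x β ≤ 1) : Q.bil x x ≤ 0 :=
  apply_self_nonpos_of_mem_closure titsForm_isSymm (fun _ hβ => hβ.2)
    (fun _ hβ _ hγ => bilinReflection_mem_latticeRoots hβ hγ) hx hle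

theorem Connected.eq_zero_of_minuscule (hconn : Q.Connected) (hQ : Q.PosSemidef)
    (hL : L ≤ vanishAt k) (hx : x ∈ AddSubgroup.closure (latticeRoots L))
    (hle : ∀ β ∈ latticeRoots L, Q.bil x β ≤ 1) : x = 0 :=
  hconn.eq_zero_of_isotropic hQ ((bil_self_le_zero_of_minuscule hx hle).antisymm (hQ x))
    (mem_vanishAt.1 (hL ((AddSubgroup.closure_le L).2 (fun _ hβ => hβ.1) hx)))

theorem Connected.loopfree_of_ne (hconn : Q.Connected) (hQ : Q.PosSemidef) {i : Q.I}
    (hi : i ≠ k) : Q.Loopfree i := by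
  by_contra hloop
  have hzero := hconn.eq_zero_of_isotropic (k := k) hQ
    ((bil_ev_self_nonpos_of_not_loopfree hloop).antisymm (hQ _)) (if_neg hi.symm)
  simpa [ev] using congrFun hzero i

theorem Connected.vanishAt_le_closure_latticeRoots (hconn : Q.Connected) (hQ : Q.PosSemidef) :
    vanishAt k ≤ AddSubgroup.closure (latticeRoots (vanishAt k)) := by
  intro x hx
  rw [← sum_smul_ev x]
  refine AddSubgroup.sum_mem _ fun i _ => ?_
  by_cases hi : i = k
  · rw [hi, mem_vanishAt.1 hx, zero_smul]
    exact AddSubgroup.zero_mem _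
  · have hroot : Q.ev i ∈ latticeRoots (vanishAt k) :=
      ⟨if_neg (Ne.symm hi), bil_ev_self_of_loopfree (hconn.loopfree_of_ne hQ hi)⟩
    exact AddSubgroup.zsmul_mem _ (AddSubgroup.subset_closure hroot) _

theorem Connected.isotropic_pos (hconn : Q.Connected) (hQ : Q.PosSemidef)
    (hδ : Q.bil δ δ = 0) (hk : 0 < δ k) (i : Q.I) : 0 < δ i := by
  have hnonneg := hconn.nonneg_of_pos hQ (hδ.trans_le zero_le_two) hk
  refine (hconn.eq_zero_or_forall_pos hQ hnonneg hδ).resolve_left (fun h => ?_) i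
  exact hk.ne' (congrFun h k)

theorem Connected.add_nonneg_of_vanishAt (hconn : Q.Connected) (hQ : Q.PosSemidef)
    (hδ : Q.bil δ δ = 0) (hk : 0 < δ k) (hx : x k = 0) (hxx : Q.bil x x ≤ 2) : 0 ≤ x + δ := by
  have hself := hQ.bil_add_smul_self hδ x 1
  rw [one_smul] at hself
  exact hconn.nonneg_of_pos (k := k) hQ (hself.trans_le hxx) (by simpa [hx] using hk)

-- If `x ≠ 0`, then `x` is not minuscule, so subtracting some root of `vanishAt k` lowers
-- `(x, x)` by at least `2`.
theorem Connected.add_nsmul_nonneg (hconn : Q.Connected) (hQ : Q.PosSemidef)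
    (hδ : Q.bil δ δ = 0) (hk : 0 < δ k) {r : ℕ} (hx : x k = 0) (hxx : Q.bil x x ≤ 2 * r) :
    0 ≤ x + r • δ := by
  have hδ_nonneg : 0 ≤ δ := fun i => (hconn.isotropic_pos hQ hδ hk i).le
  induction r generalizing x with
  | zero =>
    have hx0 := hconn.eq_zero_of_isotropic hQ ((by simpa using hxx : Q.bil x x ≤ 0).antisymm
      (hQ x)) hx
    simp [hx0]
  | succ r ih =>
    by_cases hx0 : x = 0
    · rw [hx0, zero_add]
      exact nsmul_nonneg hδ_nonneg _
    obtain ⟨β, hβ, hxβ⟩ : ∃ β ∈ latticeRoots (vanishAt k), 1 < Q.bil x β := by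
      by_contra! hle
      exact hx0 (hconn.eq_zero_of_minuscule hQ le_rfl
        (hconn.vanishAt_le_closure_latticeRoots hQ hx) hle)
    have hβk : β k = 0 := mem_vanishAt.1 hβ.1
    have hsub : Q.bil (x - β) (x - β) ≤ 2 * r := by
      rw [bil_sub_left, bil_sub_right, bil_sub_right, bil_comm β x, hβ.2]
      push_cast at hxx
      linarith
    have hsum := add_nonneg (ih (x := x - β) (by simp [hx, hβk]) hsub)
      (hconn.add_nonneg_of_vanishAt hQ hδ hk hβk hβ.2.le)
    calc 0 ≤ x - β + r • δ + (β + δ) := hsum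
      _ = x + (r + 1) • δ := by rw [succ_nsmul]; abel

theorem Connected.nonneg_of_bil_self_le (hconn : Q.Connected) (hQ : Q.PosSemidef)
    (hδ : Q.bil δ δ = 0) (hδk : δ k = 1) (hx : Q.bil x x ≤ 2 * x k) : 0 ≤ x := by
  lift x k to ℕ using by linarith [hQ x] with r hr
  have hself := hQ.bil_add_smul_self hδ x (-r)
  have h := hconn.add_nsmul_nonneg (x := x + (-r : ℤ) • δ) (k := k) hQ hδ (by simp [hδk])
    (by simp [hδk, ← hr]) (hself.trans_le hx)
  simpa using h

theorem Connected.sub_smul_mem_closure_latticeRoots (hconn : Q.Connected) (hQ : Q.PosSemidef)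
    (hδ : Q.bil δ δ = 0) (hδk : δ k = 1) (hδL : δ ∈ L)
    (hx : x ∈ AddSubgroup.closure (shortVectors L)) :
    x - x k • δ ∈ AddSubgroup.closure (latticeRoots (L ⊓ vanishAt k)) := by
  let proj : (Q.I → ℤ) →+ (Q.I → ℤ) :=
    AddMonoidHom.id _ - (zmultiplesHom _ δ).comp (Pi.evalAddMonoidHom (fun _ => ℤ) k)
  suffices hgen : AddSubgroup.closure (shortVectors L) ≤
      (AddSubgroup.closure (latticeRoots (L ⊓ vanishAt k))).comap proj from hgen hx
  refine (AddSubgroup.closure_le _).2 fun z ⟨hzL, hz⟩ => ?_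
  have hself : Q.bil (z - z k • δ) (z - z k • δ) = Q.bil z z := by
    rw [sub_eq_add_neg, ← neg_smul, hQ.bil_add_smul_self hδ]
  have hk : (z - z k • δ) k = 0 := by simp [hδk]
  change z - z k • δ ∈ AddSubgroup.closure _
  obtain ⟨c, hc⟩ := even_bil_self z
  have hnonneg := hQ z
  obtain h0 | h2 : Q.bil z z = 0 ∨ Q.bil z z = 2 := by lia
  · rw [hconn.eq_zero_of_isotropic hQ (hself.trans h0) hk]
    exact AddSubgroup.zero_mem _
  · exact AddSubgroup.subset_closure
      ⟨⟨L.sub_mem hzL (L.zsmul_mem hδL _), hk⟩, hself.trans h2⟩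

-- A root `β` of `L` vanishing at `k` gives the nonnegative root `β + δ`, whose coordinate at `k`
-- is `1`; so the bound makes `y - y k • δ` minuscule.
theorem Connected.eq_smul_of_bil_le (hconn : Q.Connected) (hQ : Q.PosSemidef)
    (hδ : Q.bil δ δ = 0) (hδk : δ k = 1) (hδL : δ ∈ L)
    (hy : y ∈ AddSubgroup.closure (shortVectors L))
    (hle : ∀ β ∈ latticeRoots L, 0 ≤ β → Q.bil y β ≤ β k) : y = y k • δ := by
  refine sub_eq_zero.1 (hconn.eq_zero_of_minuscule hQ inf_le_right
    (hconn.sub_smul_mem_closure_latticeRoots hQ hδ hδk hδL hy) fun β ⟨⟨hβL, hβk⟩, hβ⟩ => ?_)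
  have hself : Q.bil (β + δ) (β + δ) = 2 := by
    simpa [hβ] using hQ.bil_add_smul_self hδ β 1
  have hnonneg : 0 ≤ β + δ :=
    hconn.add_nonneg_of_vanishAt hQ hδ (hδk ▸ one_pos) (mem_vanishAt.1 hβk) hβ.le
  calc Q.bil (y - y k • δ) β = Q.bil y (β + δ) := by
        rw [bil_sub_left, bil_smul_left, hQ.bil_eq_zero hδ, bil_add_right, bil_comm y δ,
          hQ.bil_eq_zero hδ, mul_zero, sub_zero, add_zero]
    _ ≤ (β + δ) k := hle _ ⟨L.add_mem hβL hδL, hself⟩ hnonneg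
    _ = 1 := by rw [Pi.add_apply, mem_vanishAt.1 hβk, hδk, zero_add]

end RootLattice

section FullEmbedding

/-- An isomorphism of `P` onto a full subquiver of `Q`. -/
structure FullEmb (P Q : FinQuiver) where
  vtx : P.I → Q.I
  arr : P.A → Q.A
  vtx_injective : Function.Injective vtx
  arr_injective : Function.Injective arr
  h_arr : ∀ a, Q.h (arr a) = vtx (P.h a)
  t_arr : ∀ a, Q.t (arr a) = vtx (P.t a)
  mem_range_arr : ∀ a, Q.h a ∈ Set.range vtx → Q.t a ∈ Set.range vtx → a ∈ Set.range arr

namespace FullEmb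

variable {P Q : FinQuiver} (F : FullEmb P Q)

/-- Extension by zero `ℤ^{I(P)} → ℤ^{I(Q)}` along a full embedding of quivers. -/
def extend : (P.I → ℤ) →ₗ[ℤ] (Q.I → ℤ) := Function.ExtendByZero.linearMap ℤ F.vtx

theorem extend_vtx (x : P.I → ℤ) (i : P.I) : F.extend x (F.vtx i) = x i :=
  F.vtx_injective.extend_apply x 0 i

theorem extend_of_notMem_range (x : P.I → ℤ) {v : Q.I} (hv : v ∉ Set.range F.vtx) :
    F.extend x v = 0 :=
  Function.extend_apply' _ _ v hv

theorem extend_ev (i : P.I) : F.extend (P.ev i) = Q.ev (F.vtx i) := by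
  funext v
  by_cases hv : v ∈ Set.range F.vtx
  · obtain ⟨u, rfl⟩ := hv
    simp only [extend_vtx, ev, F.vtx_injective.eq_iff]
  · rw [F.extend_of_notMem_range _ hv]
    exact (if_neg fun h => hv ⟨i, h.symm⟩).symm

theorem extend_nonneg {x : P.I → ℤ} (hx : 0 ≤ x) : 0 ≤ F.extend x := fun v => by
  by_cases hv : v ∈ Set.range F.vtx
  · obtain ⟨u, rfl⟩ := hv
    rw [extend_vtx]
    exact hx u
  · exact (F.extend_of_notMem_range x hv).ge

theorem bil_extend (x y : P.I → ℤ) : Q.bil (F.extend x) (F.extend y) = P.bil x y := by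
  rw [bil_eq_sum, bil_eq_sum]
  congr 1 <;> symm
  · refine Fintype.sum_of_injective F.vtx F.vtx_injective _ _ (fun v hv => ?_) fun i => ?_
    · rw [F.extend_of_notMem_range x hv, mul_zero, zero_mul]
    · rw [extend_vtx, extend_vtx]
  · refine Fintype.sum_of_injective F.arr F.arr_injective _ _ (fun a ha => ?_) fun a => ?_
    · rcases not_and_or.1 fun h => ha (F.mem_range_arr a h.1 h.2) with h | h <;>
        simp only [F.extend_of_notMem_range _ h, zero_mul, mul_zero, add_zero]
    · simp only [h_arr, t_arr, extend_vtx]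

theorem loopfree_vtx {i : P.I} (hi : P.Loopfree i) : Q.Loopfree (F.vtx i) := by
  rintro a ⟨hh, ht⟩
  obtain ⟨a, rfl⟩ := F.mem_range_arr a ⟨i, hh.symm⟩ ⟨i, ht.symm⟩
  rw [h_arr] at hh
  rw [t_arr] at ht
  exact hi a ⟨F.vtx_injective hh, F.vtx_injective ht⟩

theorem extend_refl (i : P.I) (x : P.I → ℤ) :
    F.extend (P.refl i x) = Q.refl (F.vtx i) (F.extend x) := by
  rw [refl, refl, map_sub, map_smul, extend_ev, ← extend_ev, bil_extend]

theorem isRealRoot_extend {x : P.I → ℤ} (hx : P.IsRealRoot x) : Q.IsRealRoot (F.extend x) := by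
  induction hx with
  | simple i hi =>
    rw [extend_ev]
    exact .simple _ (F.loopfree_vtx hi)
  | reflect i hi x _ ih =>
    rw [extend_refl]
    exact .reflect _ (F.loopfree_vtx hi) _ ih

theorem adj_vtx {u v : P.I} : P.Adj u v → Q.Adj (F.vtx u) (F.vtx v) := by
  rintro ⟨a, h⟩
  refine ⟨F.arr a, ?_⟩
  rw [h_arr, t_arr]
  exact h.imp (And.imp (congrArg _) (congrArg _)) (And.imp (congrArg _) (congrArg _))

theorem suppConnected_extend (hconn : P.Connected) {x : P.I → ℤ} (hx : ∀ i, x i ≠ 0) :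
    Q.SuppConnected (F.extend x) := by
  intro u v hu hv
  obtain ⟨u, rfl⟩ := not_imp_comm.1 (F.extend_of_notMem_range x) hu
  obtain ⟨v, rfl⟩ := not_imp_comm.1 (F.extend_of_notMem_range x) hv
  refine (hconn u v).lift F.vtx fun p q hpq => ?_
  simp only [Function.onFun, extend_vtx]
  exact ⟨hx p, hx q, F.adj_vtx hpq⟩

/-- `Q` arises from the image of `P` by adjoining the vertex `j` and one arrow joining `j` to the
image of `k`. -/
structure IsOnePointExt (j : Q.I) (k : P.I) : Prop where
  range_vtx : Set.range F.vtx = {j}ᶜ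
  exists_arrow : ∃ b, (Q.h b = j ∧ Q.t b = F.vtx k ∨ Q.h b = F.vtx k ∧ Q.t b = j) ∧
    ∀ a, Q.h a = j ∨ Q.t a = j → a = b

namespace IsOnePointExt

variable {F} {j : Q.I} {k : P.I} {α : Q.I → ℤ} {δ : P.I → ℤ}

theorem vtx_ne (hF : F.IsOnePointExt j k) (i : P.I) : F.vtx i ≠ j :=
  hF.range_vtx.le ⟨i, rfl⟩

theorem notMem_range (hF : F.IsOnePointExt j k) : j ∉ Set.range F.vtx :=
  fun ⟨i, hi⟩ => hF.vtx_ne i hi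

theorem extend_apply_new (hF : F.IsOnePointExt j k) (x : P.I → ℤ) : F.extend x j = 0 :=
  F.extend_of_notMem_range x hF.notMem_range

theorem loopfree_new (hF : F.IsOnePointExt j k) : Q.Loopfree j := by
  obtain ⟨b, hb, honly⟩ := hF.exists_arrow
  rintro a ⟨hh, ht⟩
  obtain rfl := honly a (Or.inl hh)
  rcases hb with hb | hb
  · exact hF.vtx_ne k (hb.2.symm.trans ht)
  · exact hF.vtx_ne k (hb.1.symm.trans hh)

theorem bil_ev_new (hF : F.IsOnePointExt j k) (x : Q.I → ℤ) :
    Q.bil x (Q.ev j) = 2 * x j - x (F.vtx k) := by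
  obtain ⟨b, hb, honly⟩ := hF.exists_arrow
  have hkj := hF.vtx_ne k
  rw [bil_ev, Finset.sum_eq_single b]
  · rcases hb with ⟨hh, ht⟩ | ⟨hh, ht⟩ <;> simp [hh, ht, hkj]
  · intro a _ hab
    have ha := mt (honly a) hab
    rw [not_or] at ha
    simp [ha]
  · exact fun hb => absurd (Finset.mem_univ b) hb

theorem extend_comp_vtx_add (hF : F.IsOnePointExt j k) (x : Q.I → ℤ) :
    F.extend (x ∘ F.vtx) + x j • Q.ev j = x := by
  funext v
  by_cases hv : v = j
  · simp [hv, hF.extend_apply_new, ev]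
  · obtain ⟨u, rfl⟩ := hF.range_vtx.ge hv
    simp [extend_vtx, ev, hv]

theorem extend_comp_vtx (hF : F.IsOnePointExt j k) {x : Q.I → ℤ} (hx : x j = 0) :
    F.extend (x ∘ F.vtx) = x := by
  simpa [hx] using hF.extend_comp_vtx_add x

theorem bil_extend_right (hF : F.IsOnePointExt j k) (x : Q.I → ℤ) (y : P.I → ℤ) :
    Q.bil x (F.extend y) = P.bil (x ∘ F.vtx) y - x j * y k := by
  conv_lhs => rw [← hF.extend_comp_vtx_add x]
  rw [bil_add_left, bil_extend, bil_smul_left, bil_comm (Q.ev j), hF.bil_ev_new,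
    hF.extend_apply_new, extend_vtx]
  ring

theorem bil_self (hF : F.IsOnePointExt j k) (hα : α j = 1) :
    Q.bil α α = P.bil (α ∘ F.vtx) (α ∘ F.vtx) + 2 - 2 * α (F.vtx k) := by
  have hsplit := hF.extend_comp_vtx_add α
  rw [hα, one_smul] at hsplit
  calc Q.bil α α = Q.bil α (F.extend (α ∘ F.vtx)) + Q.bil α (Q.ev j) := by
        rw [← bil_add_right, hsplit]
    _ = _ := by
        rw [hF.bil_extend_right, hF.bil_ev_new, hα, Function.comp_apply]
        ring

theorem nonneg_of_bil_self_le_two (hF : F.IsOnePointExt j k) (hconn : P.Connected)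
    (hP : P.PosSemidef) (hδ : P.bil δ δ = 0) (hδk : δ k = 1) (hα : α j = 1)
    (hle : Q.bil α α ≤ 2) : 0 ≤ α := by
  rw [hF.bil_self hα] at hle
  have hrestrict : 0 ≤ α ∘ F.vtx :=
    hconn.nonneg_of_bil_self_le (k := k) hP hδ hδk (by simp only [Function.comp_apply]; linarith)
  rw [← hF.extend_comp_vtx_add α, hα, one_smul]
  exact add_nonneg (F.extend_nonneg hrestrict) (ev_nonneg j)

theorem isPosRoot_extend (hF : F.IsOnePointExt j k) (hconn : P.Connected) (hP : P.PosSemidef)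
    (hδ : P.bil δ δ = 0) (hδk : 0 < δ k) : Q.IsPosRoot (F.extend δ) := by
  have hpos := hconn.isotropic_pos hP hδ hδk
  have hnonneg : 0 ≤ F.extend δ := F.extend_nonneg fun i => (hpos i).le
  have hne : F.extend δ ≠ 0 := fun h => hδk.ne' <| by
    rw [← F.extend_vtx δ k, h, Pi.zero_apply]
  refine ⟨.fund _ ⟨hne, hnonneg, F.suppConnected_extend hconn fun i => (hpos i).ne', ?_⟩,
    hnonneg, hne⟩
  intro v
  by_cases hv : v = j
  · rw [hv, hF.bil_ev_new, hF.extend_apply_new, extend_vtx]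
    linarith
  · obtain ⟨u, rfl⟩ := hF.range_vtx.ge hv
    rw [← extend_ev, bil_extend, hP.bil_eq_zero hδ]

end IsOnePointExt

end FullEmb

end FullEmbedding

section Sigma

variable {Q : FinQuiver} {K : Type} [Field K] {l : Q.I → K} {α x β : Q.I → ℤ}

theorem pair_add (l : Q.I → K) (x y : Q.I → ℤ) :
    Q.pair K l (x + y) = Q.pair K l x + Q.pair K l y := by
  simp only [pair, Pi.add_apply, Int.cast_add, mul_add, Finset.sum_add_distrib]

/-- The lattice of the `x ∈ ℤ^I` with `λ·x = 0`. -/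
def pairKer (l : Q.I → K) : AddSubgroup (Q.I → ℤ) :=
  (AddMonoidHom.mk' (Q.pair K l) (pair_add l)).ker

theorem pp_add_mul_pp_lt_of_mem_sigmaSet (hα : α ∈ Q.SigmaSet K l) (hx : x ∈ Q.Rplus K l)
    (hβ : β ∈ Q.Rplus K l) {n : ℕ} (hn : n ≠ 0) (h : α = x + n • β) :
    Q.pp x + n * Q.pp β < Q.pp α := by
  have hlt := hα.2 (n + 1) (Fin.cons x fun _ => β) (by lia) (Fin.cases hx fun _ => hβ)
    (by simp [Fin.sum_univ_succ, h])
  simpa [Fin.sum_univ_succ] using hlt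

-- Otherwise `α` is the sum of its reflection in `β`, which has the same `p`, and of copies of
-- `β`, for which `p` is zero.
theorem bil_nonpos_of_mem_sigmaSet (hα : α ∈ Q.SigmaSet K l) (hβ : β ∈ Q.Rplus K l)
    (hββ : Q.bil β β = 2) (hrefl : bilinReflection Q.titsForm β α ∈ Q.Rplus K l) :
    Q.bil α β ≤ 0 := by
  by_contra! hpos
  obtain ⟨n, hn⟩ := Int.eq_ofNat_of_zero_le hpos.le
  have hdecomp : α = bilinReflection Q.titsForm β α + n • β := by
    rw [bilinReflection_apply, titsForm_apply, hn, natCast_zsmul, sub_add_cancel]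
  have hself : Q.bil (bilinReflection Q.titsForm β α) (bilinReflection Q.titsForm β α) =
      Q.bil α α := apply_bilinReflection_bilinReflection titsForm_isSymm hββ α α
  have hlt := pp_add_mul_pp_lt_of_mem_sigmaSet hα hrefl hβ (by lia) hdecomp
  have hβ_zero : Q.pp β = 0 := by linarith [two_mul_pp β]
  rw [hβ_zero, mul_zero, add_zero] at hlt
  linarith [two_mul_pp α, two_mul_pp (bilinReflection Q.titsForm β α)]

end Sigma

section OnePointExtension

variable {P Q : FinQuiver} {F : FullEmb P Q} {j : Q.I} {k : P.I} {δ : P.I → ℤ}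
  {K : Type} [Field K] {l : Q.I → K} {α x : Q.I → ℤ}

namespace FullEmb.IsOnePointExt

theorem bil_comp_vtx_le (hF : F.IsOnePointExt j k) (hconn : P.Connected) (hP : P.PosSemidef)
    (hδ : P.bil δ δ = 0) (hδk : δ k = 1) (hα : α ∈ Q.SigmaSet K l) (hαj : α j = 1)
    {β : P.I → ℤ} (hβl : F.extend β ∈ pairKer l) (hβ : 0 ≤ β) (hββ : P.bil β β = 2) :
    P.bil (α ∘ F.vtx) β ≤ β k := by
  have hself : Q.bil (F.extend β) (F.extend β) = 2 := (F.bil_extend β β).trans hββ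
  have hreal := F.isRealRoot_extend (hconn.isRealRoot_of_nonneg hP hβ hββ)
  have hβR : F.extend β ∈ Q.Rplus K l :=
    ⟨⟨hreal.isRoot, F.extend_nonneg hβ, fun h => by simp [h, bil_eq_sum] at hself⟩, hβl⟩
  have hroot := hreal.isRoot_bilinReflection hα.1.1.1
  have hj : bilinReflection Q.titsForm (F.extend β) α j = 1 := by
    simp [bilinReflection_apply, hF.extend_apply_new, hαj]
  have hrefl : bilinReflection Q.titsForm (F.extend β) α ∈ Q.Rplus K l := by
    refine ⟨⟨hroot, hF.nonneg_of_bil_self_le_two hconn hP hδ hδk hj hroot.bil_self_le_two,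
      fun h => by simp [h] at hj⟩, ?_⟩
    rw [bilinReflection_apply]
    exact (pairKer l).sub_mem hα.1.2 ((pairKer l).zsmul_mem hβl _)
  have hle := bil_nonpos_of_mem_sigmaSet hα hβR hself hrefl
  rw [hF.bil_extend_right, hαj, one_mul] at hle
  linarith

theorem comp_vtx_mem_closure (hF : F.IsOnePointExt j k) (hx : x ∈ Q.NRplus K l)
    (hxj : x j = 0) : x ∘ F.vtx ∈ AddSubgroup.closure
      (shortVectors ((pairKer l).comap F.extend.toAddMonoidHom)) := by
  suffices h : 0 ≤ x ∧ (x j = 0 → x ∘ F.vtx ∈ AddSubgroup.closure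
      (shortVectors ((pairKer l).comap F.extend.toAddMonoidHom))) from h.2 hxj
  clear hxj
  induction hx using AddSubmonoid.closure_induction with
  | mem x hx =>
    refine ⟨hx.1.2.1, fun hxj => AddSubgroup.subset_closure ?_⟩
    have hext := hF.extend_comp_vtx hxj
    refine ⟨?_, ?_⟩
    · change F.extend (x ∘ F.vtx) ∈ pairKer l
      rw [hext]
      exact hx.2
    · rw [← F.bil_extend, hext]
      exact hx.1.1.bil_self_le_two
  | zero => exact ⟨le_rfl, fun _ => AddSubgroup.zero_mem _⟩
  | add x y _ _ hx hy =>
    refine ⟨add_nonneg hx.1 hy.1, fun hj => ?_⟩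
    obtain ⟨hxj, hyj⟩ := (add_eq_zero_iff_of_nonneg (hx.1 j) (hy.1 j)).1 hj
    exact AddSubgroup.add_mem _ (hx.2 hxj) (hy.2 hyj)

theorem comp_vtx_eq_smul (hF : F.IsOnePointExt j k) (hconn : P.Connected) (hP : P.PosSemidef)
    (hδ : P.bil δ δ = 0) (hδk : δ k = 1) (hδl : F.extend δ ∈ pairKer l)
    (hα : α ∈ Q.SigmaSet K l) (hαj : α j = 1) {m : ℕ}
    (hrem : m • F.extend δ - (α - Q.ev j) ∈ Q.NRplus K l) :
    α ∘ F.vtx = α (F.vtx k) • δ := by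
  refine hconn.eq_smul_of_bil_le (k := k) hP hδ hδk
    (L := (pairKer l).comap F.extend.toAddMonoidHom) hδl ?_ fun β hβ hβ_nonneg =>
      hF.bil_comp_vtx_le hconn hP hδ hδk hα hαj hβ.1 hβ_nonneg hβ.2
  have hmem := hF.comp_vtx_mem_closure hrem (by simp [hF.extend_apply_new, hαj, ev])
  have hcomp : (m • F.extend δ - (α - Q.ev j)) ∘ F.vtx = m • δ - α ∘ F.vtx := by
    funext i
    simp [extend_vtx, ev, hF.vtx_ne i]
  have hδmem : δ ∈ AddSubgroup.closure
      (shortVectors ((pairKer l).comap F.extend.toAddMonoidHom)) :=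
    AddSubgroup.subset_closure ⟨hδl, hδ.trans_le zero_le_two⟩
  rw [hcomp] at hmem
  simpa using AddSubgroup.sub_mem _ (AddSubgroup.nsmul_mem _ hδmem m) hmem

theorem ev_mem_Rplus (hF : F.IsOnePointExt j k) (hj : Q.ev j ∈ pairKer l) :
    Q.ev j ∈ Q.Rplus K l :=
  ⟨⟨.simple j hF.loopfree_new, ev_nonneg j, fun h => by simpa [ev] using congrFun h j⟩, hj⟩

-- If `α = ε_j + n δ` with `n ≠ 0`, then `p(α) = n = p(ε_j) + n p(δ)`.
theorem eq_ev_of_comp_vtx_eq_smul (hF : F.IsOnePointExt j k) (hconn : P.Connected)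
    (hP : P.PosSemidef) (hδ : P.bil δ δ = 0) (hδk : 0 < δ k) (hδl : F.extend δ ∈ pairKer l)
    (hα : α ∈ Q.SigmaSet K l) (hαj : α j = 1) (heq : α ∘ F.vtx = α (F.vtx k) • δ) :
    α = Q.ev j := by
  lift α (F.vtx k) to ℕ using hα.1.1.2.1 _ with n hn
  have hdecomp : α = Q.ev j + n • F.extend δ := by
    have hsplit := hF.extend_comp_vtx_add α
    rw [heq, hαj, one_smul, map_smul, natCast_zsmul, add_comm] at hsplit
    exact hsplit.symm
  by_contra hne
  have hn0 : n ≠ 0 := fun h => hne (by simpa [h] using hdecomp)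
  have hevl : Q.ev j ∈ pairKer l := by
    rw [← add_sub_cancel_right (Q.ev j) (n • F.extend δ), ← hdecomp]
    exact (pairKer l).sub_mem hα.1.2 ((pairKer l).nsmul_mem hδl n)
  have hlt := pp_add_mul_pp_lt_of_mem_sigmaSet hα (hF.ev_mem_Rplus hevl)
    ⟨hF.isPosRoot_extend hconn hP hδ hδk, hδl⟩ hn0 hdecomp
  have hpp_ev : Q.pp (Q.ev j) = 0 := by
    linarith [two_mul_pp (Q.ev j), bil_ev_self_of_loopfree hF.loopfree_new]
  have hpp_δ : Q.pp (F.extend δ) = 1 := by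
    linarith [two_mul_pp (F.extend δ), F.bil_extend δ δ]
  have hpp_α : Q.pp α = n := by
    have hself := hF.bil_self hαj
    rw [heq, bil_smul_left, bil_smul_right, hδ, mul_zero, mul_zero, ← hn] at hself
    linarith [two_mul_pp α]
  rw [hpp_ev, hpp_δ, hpp_α, mul_one, zero_add] at hlt
  exact lt_irrefl _ hlt

end FullEmb.IsOnePointExt

end OnePointExtension

section Restrict

variable (Q : FinQuiver) (S : Set Q.I) (B : Set Q.A) (hh : ∀ a ∈ B, Q.h a ∈ S)
  (ht : ∀ a ∈ B, Q.t a ∈ S)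

/-- The inclusion of a full subquiver. -/
def restrictEmb (hfull : ∀ a, Q.h a ∈ S → Q.t a ∈ S → a ∈ B) :
    FullEmb (Q.restrict S B hh ht) Q where
  vtx := Subtype.val
  arr := Subtype.val
  vtx_injective := Subtype.val_injective
  arr_injective := Subtype.val_injective
  h_arr _ := rfl
  t_arr _ := rfl
  mem_range_arr a := by
    rintro ⟨u, hu⟩ ⟨v, hv⟩
    exact ⟨⟨a, hfull a (hu ▸ u.2) (hv ▸ v.2)⟩, rfl⟩

end Restrict

theorem isOnePointExt_restrictEmb {Q : FinQuiver} {j k : Q.I} {b : Q.A} (hkj : k ≠ j)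
    (hb : (Q.h b = j ∧ Q.t b = k) ∨ (Q.h b = k ∧ Q.t b = j))
    (honly : ∀ a, Q.h a = j ∨ Q.t a = j → a = b) :
    (Q.restrictEmb {i | i ≠ j} {a | a ≠ b} (fun a ha hj => ha (honly a (Or.inl hj)))
      (fun a ha hj => ha (honly a (Or.inr hj)))
      (fun _ hh ht hab => hb.elim (fun h => hh (hab ▸ h.1)) fun h => ht (hab ▸ h.2))).IsOnePointExt
      j ⟨k, hkj⟩ :=
  ⟨Subtype.range_val, b, hb, honly⟩

theorem IsMinImag.bil_self {Q : FinQuiver} {δ : Q.I → ℤ} (hδ : Q.IsMinImag δ) :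
    Q.bil δ δ = 0 := by
  rw [bil_eq_sum_mul_bil_ev]
  exact Finset.sum_eq_zero fun i _ => by rw [hδ.2.2.1 i, mul_zero]

end FinQuiver

theorem stmt16_general {P Q : FinQuiver} {F : P.FullEmb Q} {j : Q.I} {k : P.I}
    (hF : F.IsOnePointExt j k) (hconn : P.Connected) (hP : P.PosSemidef) {δ : Q.I → ℤ}
    (hδj : δ j = 0) (hδ : P.bil (δ ∘ F.vtx) (δ ∘ F.vtx) = 0) (hδk : δ (F.vtx k) = 1)
    {K : Type} [Field K] {l : Q.I → K} (hlδ : Q.pair K l δ = 0) {α : Q.I → ℤ}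
    (hα : α ∈ Q.SigmaSet K l) (hαj : α j = 1) {m : ℕ}
    (hrem : m • δ - (α - α j • Q.ev j) ∈ Q.NRplus K l) : α = Q.ev j := by
  rw [hαj, one_smul] at hrem
  rw [← hF.extend_comp_vtx hδj] at hlδ hrem
  exact hF.eq_ev_of_comp_vtx_eq_smul hconn hP hδ (one_pos.trans_eq hδk.symm) hlδ hα hαj
    (hF.comp_vtx_eq_smul hconn hP hδ hδk hlδ hα hαj hrem)

/-- let `Q` be obtained from an extended Dynkin quiver `Q'` (with
extending vertex `k` and minimal positive imaginary root `δ`, regarded as a vector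
on `Q` with `δ_j = 0`) by adjoining one vertex `j` and one arrow `b` joining `j`
to `k`.  If `λ·δ = λ_j = 0`, `α ∈ Σ_λ`, `α_j = 1` and `mδ − α' ∈ ℕR_λ^+` for some
`m ≥ 0` (where `α' = α − α_j ε_j`), then `α = ε_j`. -/
theorem stmt16 (Q : FinQuiver) (K : Type) [Field K] [CharZero K] [IsAlgClosed K]
    (l : Q.I → K) (j k : Q.I) (b : Q.A) (δ α : Q.I → ℤ) (m : ℕ)
    (hjk : j ≠ k)
    (hb : (Q.h b = j ∧ Q.t b = k) ∨ (Q.h b = k ∧ Q.t b = j))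
    (honly : ∀ a : Q.A, Q.h a = j ∨ Q.t a = j → a = b)
    (hED : (Q.restrict {i | i ≠ j} {a | a ≠ b}
        (fun a ha hja => ha (honly a (Or.inl hja)))
        (fun a ha hja => ha (honly a (Or.inr hja)))).IsExtDynkin)
    (hmin : (Q.restrict {i | i ≠ j} {a | a ≠ b}
        (fun a ha hja => ha (honly a (Or.inl hja)))
        (fun a ha hja => ha (honly a (Or.inr hja)))).IsMinImag (fun i => δ i.1))
    (hδj : δ j = 0) (hδk : δ k = 1)
    (hlδ : Q.pair K l δ = 0) (hlj : l j = 0)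
    (hα : α ∈ Q.SigmaSet K l) (hαj : α j = 1)
    (hrem : m • δ - (α - α j • Q.ev j) ∈ Q.NRplus K l) :
    α = Q.ev j :=
  stmt16_general (FinQuiver.isOnePointExt_restrictEmb hjk.symm hb honly) hED.1 hED.2.1 hδj
    hmin.bil_self hδk hlδ hα hαj hrem

end
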